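/- arXiv:0712.3863 — 9 statements merged into one kernel-verified Lean document; each statement's English description precedes it below -/
import Mathlib

section
/- Let V be a finite-dimensional complex vector space equipped with a quaternionic structure, i.e. an ℝ-linear map J : V → V with J(c·v) = conj(c)·J(v) for all c ∈ ℂ, v ∈ V, and J ∘ J = −id. Let f : V → V be a ℂ-linear map which commutes with J and is bijective. Then the complex determinant of f is a positive real number: there exists r ∈ ℝ with r > 0 and det_ℂ(f) = r. -/
/-!
The proof is by induction on `dim V`, for the weaker claim that the determinant is a nonnegative
real; that claim needs no invertibility, so it passes to quotients without further hypotheses.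

Let `f v = μ v` with `v ≠ 0`. Since `f` commutes with the conjugate-linear map `J`, also
`f (J v) = conj μ • J v`. The vectors `v` and `J v` are independent: `J v = a v` would give
`-v = J (J v) = |a|² v`. Hence `W = span {v, J v}` is a plane stable under `f` and `J`, on which
`f` has determinant `μ conj μ = |μ|² ≥ 0`. The quotient `V ⧸ W` inherits `f` and `J`, and
`det f = det (f|W) * det (f on V ⧸ W)`. For bijective `f` the determinant is moreover nonzero.
-/

/-- A vector and its image under a quaternionic structure are linearly independent. -/
lemma linearIndependent_quaternionic_pair {V : Type*} [AddCommGroup V] [Module ℂ V]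
    (J : V →ₛₗ[starRingEnd ℂ] V) (hJ2 : ∀ v, J (J v) = -v) {v : V} (hv : v ≠ 0) :
    LinearIndependent ℂ ![v, J v] := by
  rw [LinearIndependent.pair_iff' hv]
  intro a ha
  have h1 : J (J v) = ((starRingEnd ℂ a) * a) • v := by
    rw [← ha, map_smulₛₗ, ← ha, smul_smul]
  have h2 : ((starRingEnd ℂ a) * a + 1) • v = 0 := by
    rw [add_smul, ← h1, hJ2, one_smul, neg_add_cancel]
  have h3 := (smul_eq_zero.mp h2).resolve_right hv
  rw [mul_comm, Complex.mul_conj] at h3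
  have h4 : Complex.normSq a + 1 = 0 := by exact_mod_cast h3
  linarith [Complex.normSq_nonneg a]

/-- The determinant of an endomorphism commuting with a quaternionic structure is a nonnegative
real. The quaternionic structure is bundled as a semilinear map so that it descends to quotients
by `Submodule.mapQ`; `n` is the dimension on which the induction runs. -/
lemma det_nonneg_of_quaternionic (n : ℕ) : ∀ (V : Type*) [AddCommGroup V] [Module ℂ V]
    [FiniteDimensional ℂ V] (J : V →ₛₗ[starRingEnd ℂ] V) (_ : ∀ v, J (J v) = -v)
    (f : V →ₗ[ℂ] V) (_ : ∀ v, f (J v) = J (f v)) (_ : Module.finrank ℂ V = n),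
    ∃ r : ℝ, 0 ≤ r ∧ LinearMap.det f = (r : ℂ) := by
  induction n using Nat.strong_induction_on with
  | _ n ih =>
  intro V _ _ _ J hJ2 f hcomm hn
  rcases subsingleton_or_nontrivial V with hV | hV
  · exact ⟨1, zero_le_one, by simp [LinearMap.det_eq_one_of_subsingleton]⟩
  obtain ⟨μ, hμ⟩ := Module.End.exists_eigenvalue f
  obtain ⟨v, hv⟩ := hμ.exists_hasEigenvector
  have hfv : f v = μ • v := hv.apply_eq_smul
  have hfJv : f (J v) = (starRingEnd ℂ μ) • J v := by rw [hcomm, hfv, map_smulₛₗ]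
  have hli := linearIndependent_quaternionic_pair J hJ2 hv.2
  set W : Submodule ℂ V := Submodule.span ℂ (Set.range ![v, J v])
  have hvW : v ∈ W := Submodule.subset_span ⟨0, rfl⟩
  have hJvW : J v ∈ W := Submodule.subset_span ⟨1, rfl⟩
  have hfW : W ≤ W.comap f := by
    refine Submodule.span_le.mpr ?_
    rintro _ ⟨i, rfl⟩
    fin_cases i
    · simpa [hfv] using W.smul_mem μ hvW
    · simpa [hfJv] using W.smul_mem (starRingEnd ℂ μ) hJvW
  have hJW : W ≤ W.comap J := by
    refine Submodule.span_le.mpr ?_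
    rintro _ ⟨i, rfl⟩
    fin_cases i
    · simpa using hJvW
    · simpa [hJ2] using hvW
  have hdetW : LinearMap.det (f.restrict hfW) = (Complex.normSq μ : ℂ) := by
    let b : Module.Basis (Fin 2) ℂ W := Module.Basis.span hli
    have hb0 : b 0 = ⟨v, hvW⟩ := Module.Basis.span_apply hli 0
    have hb1 : b 1 = ⟨J v, hJvW⟩ := Module.Basis.span_apply hli 1
    have h0 : f.restrict hfW (b 0) = μ • b 0 := Subtype.ext (by simp [hb0, hfv])
    have h1 : f.restrict hfW (b 1) = (starRingEnd ℂ μ) • b 1 :=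
      Subtype.ext (by simp [hb1, hfJv])
    rw [← LinearMap.det_toMatrix b, Matrix.det_fin_two]
    simp only [LinearMap.toMatrix_apply, h0, h1]
    simp [Complex.mul_conj]
  have hlt : Module.finrank ℂ (V ⧸ W) < n := by
    have h1 := W.finrank_quotient_add_finrank
    have h2 : Module.finrank ℂ W = 2 := by simpa using finrank_span_eq_card hli
    omega
  obtain ⟨r, hr, hdet⟩ := ih _ hlt (V ⧸ W) (W.mapQ W J hJW)
    (fun x => by
      obtain ⟨x, rfl⟩ := W.mkQ_surjective x
      simp [hJ2])
    (W.mapQ W f hfW)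
    (fun x => by
      obtain ⟨x, rfl⟩ := W.mkQ_surjective x
      simp [hcomm])
    rfl
  refine ⟨Complex.normSq μ * r, mul_nonneg (Complex.normSq_nonneg μ) hr, ?_⟩
  rw [LinearMap.det_eq_det_mul_det W f hfW, hdetW, hdet, Complex.ofReal_mul]

/-- If `V` is a finite-dimensional complex vector space with a quaternionic structure `J`
(conjugate-linear, `J ∘ J = -id`), then any bijective `ℂ`-linear endomorphism of `V`
commuting with `J` has positive real determinant. -/
theorem det_pos_of_quaternionic
    (V : Type*) [AddCommGroup V] [Module ℂ V] [FiniteDimensional ℂ V]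
    (J : V →ₗ[ℝ] V)
    (hJconj : ∀ (c : ℂ) (v : V), J (c • v) = (starRingEnd ℂ c) • J v)
    (hJ2 : ∀ v : V, J (J v) = -v)
    (f : V →ₗ[ℂ] V)
    (hf : Function.Bijective f)
    (hcomm : ∀ v : V, f (J v) = J (f v)) :
    ∃ r : ℝ, 0 < r ∧ LinearMap.det f = (r : ℂ) := by
  let K : V →ₛₗ[starRingEnd ℂ] V :=
    { toFun := J, map_add' := J.map_add, map_smul' := hJconj }
  obtain ⟨r, hr, hdet⟩ := det_nonneg_of_quaternionic _ V K hJ2 f hcomm rfl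
  refine ⟨r, lt_of_le_of_ne hr ?_, hdet⟩
  rintro rfl
  have hunit := LinearMap.isUnit_det f ((Module.End.isUnit_iff f).mpr hf)
  rw [hdet] at hunit
  simp at hunit
end

section
/- Let g be a finite-dimensional real Lie algebra with a hypercomplex structure, i.e. three integrable complex structures J_1, J_2, J_3 (each J_α is ℝ-linear with J_α ∘ J_α = −id and vanishing Nijenhuis expression ⁅J_α x, J_α y⁆ − ⁅x, y⁆ − J_α⁅J_α x, y⁆ − J_α⁅x, J_α y⁆ = 0) satisfying the quaternion relations J_1 ∘ J_2 = J_3 = −J_2 ∘ J_1. Then for every X ∈ g the quantity tr(J_α ∘ ad_{J_α X}) is independent of α: tr(J_1 ∘ ad_{J_1 X}) = tr(J_2 ∘ ad_{J_2 X}) = tr(J_3 ∘ ad_{J_3 X}). -/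
/-!
Write `N(X) = ad (I X) ∘ I - ad X - I ∘ ad (I X) - I ∘ ad X ∘ I = 0` for the integrability of a
complex structure `I`. If `J`, `K` satisfy `I J = K = -J I`, then taking the trace of `N(Z) ∘ J`,
using cyclicity and `I J I = J`, gives `2 tr(K ∘ ad (I Z)) = 2 tr(J ∘ ad Z)`. Setting `Z = J X`
yields `tr(K ∘ ad (K X)) = tr(J ∘ ad (J X))`, which is `trace_comp_ad_eq`. Both equalities follow
by applying it to the quaternionic triples `(J₃, J₁, J₂)` and `(J₁, J₂, J₃)`.
-/

/-- Only the first structure `I` of the quaternionic triple `(I, J, K)` has to be integrable. -/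
theorem trace_comp_ad_eq {g : Type*} [LieRing g] [LieAlgebra ℝ g]
    (I J K : g →ₗ[ℝ] g)
    (hI : ∀ x : g, I (I x) = -x)
    (hint : ∀ x y : g, ⁅I x, I y⁆ - ⁅x, y⁆ - I ⁅I x, y⁆ - I ⁅x, I y⁆ = 0)
    (hIJ : ∀ x : g, I (J x) = K x) (hJI : ∀ x : g, J (I x) = -(K x)) (X : g) :
    LinearMap.trace ℝ g (J ∘ₗ LieAlgebra.ad ℝ g (J X)) =
      LinearMap.trace ℝ g (K ∘ₗ LieAlgebra.ad ℝ g (K X)) := by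
  set A : Module.End ℝ g := LieAlgebra.ad ℝ g (J X) with hA
  set B : Module.End ℝ g := LieAlgebra.ad ℝ g (K X) with hB
  have eIJ : (I * J : Module.End ℝ g) = K := LinearMap.ext hIJ
  have eJI : (J * I : Module.End ℝ g) = -K := LinearMap.ext hJI
  have eIJI : (I * J * I : Module.End ℝ g) = J := by
    ext x
    simp [hJI, ← hIJ, hI]
  have hN : B * I - A - I * B - I * A * I = 0 := by
    ext y
    simpa [hA, hB, hIJ] using hint (J X) y
  have htr := congrArg (fun T => LinearMap.trace ℝ g (T * J)) hN
  have h1 : LinearMap.trace ℝ g (B * I * J) = LinearMap.trace ℝ g (K * B) := by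
    rw [mul_assoc, eIJ, LinearMap.trace_mul_comm]
  have h2 : LinearMap.trace ℝ g (I * B * J) = -LinearMap.trace ℝ g (K * B) := by
    rw [LinearMap.trace_mul_comm, ← mul_assoc, eJI, neg_mul, map_neg]
  have h3 : LinearMap.trace ℝ g (I * A * I * J) = LinearMap.trace ℝ g (J * A) := by
    rw [mul_assoc, LinearMap.trace_mul_comm, ← mul_assoc, eIJI]
  have h4 : LinearMap.trace ℝ g (A * J) = LinearMap.trace ℝ g (J * A) :=
    LinearMap.trace_mul_comm ℝ A J
  simp only [sub_mul, map_sub, zero_mul, map_zero, h1, h2, h3, h4] at htr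
  change LinearMap.trace ℝ g (J * A) = LinearMap.trace ℝ g (K * B)
  linarith

/-- For a hypercomplex structure `J₁, J₂, J₃` on a finite-dimensional real Lie algebra,
the quantity `tr(J_α ∘ ad_{J_α X})` is independent of `α`. -/
theorem trace_J_ad_J_independent
    (g : Type*) [LieRing g] [LieAlgebra ℝ g] [Module.Finite ℝ g]
    (J₁ J₂ J₃ : g →ₗ[ℝ] g)
    (hJ1 : ∀ x : g, J₁ (J₁ x) = -x)
    (hJ2 : ∀ x : g, J₂ (J₂ x) = -x)
    (hJ3 : ∀ x : g, J₃ (J₃ x) = -x)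
    (hint1 : ∀ x y : g, ⁅J₁ x, J₁ y⁆ - ⁅x, y⁆ - J₁ ⁅J₁ x, y⁆ - J₁ ⁅x, J₁ y⁆ = 0)
    (hint2 : ∀ x y : g, ⁅J₂ x, J₂ y⁆ - ⁅x, y⁆ - J₂ ⁅J₂ x, y⁆ - J₂ ⁅x, J₂ y⁆ = 0)
    (hint3 : ∀ x y : g, ⁅J₃ x, J₃ y⁆ - ⁅x, y⁆ - J₃ ⁅J₃ x, y⁆ - J₃ ⁅x, J₃ y⁆ = 0)
    (hquat : ∀ x : g, J₁ (J₂ x) = J₃ x ∧ J₂ (J₁ x) = -(J₃ x))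
    (X : g) :
    LinearMap.trace ℝ g (J₁ ∘ₗ LieAlgebra.ad ℝ g (J₁ X)) =
      LinearMap.trace ℝ g (J₂ ∘ₗ LieAlgebra.ad ℝ g (J₂ X)) ∧
    LinearMap.trace ℝ g (J₂ ∘ₗ LieAlgebra.ad ℝ g (J₂ X)) =
      LinearMap.trace ℝ g (J₃ ∘ₗ LieAlgebra.ad ℝ g (J₃ X)) := by
  have h13 : ∀ x : g, J₁ (J₃ x) = -(J₂ x) := fun x => by rw [← (hquat x).1, hJ1]
  have h31 : ∀ x : g, J₃ (J₁ x) = J₂ x := fun x => by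
    rw [← (hquat (J₁ x)).1, (hquat x).2, map_neg, h13, neg_neg]
  exact ⟨trace_comp_ad_eq J₃ J₁ J₂ hJ3 hint3 h31 h13 X,
    trace_comp_ad_eq J₁ J₂ J₃ hJ1 hint1 (fun x => (hquat x).1) (fun x => (hquat x).2) X⟩
end

section
/- Let g be a finite-dimensional real Lie algebra with a hypercomplex structure J_1, J_2, J_3 (integrable complex structures satisfying the quaternion relations J_1 ∘ J_2 = J_3 = −J_2 ∘ J_1). Define the Obata operator ∇ by ∇_X Y = (1/12) Σ_{(α,β,γ)} J_α(⁅J_β X, J_γ Y⁆ + ⁅J_β Y, J_γ X⁆) + (1/6) Σ_{α=1}^{3} J_α(⁅J_α X, Y⁆ + ⁅J_α Y, X⁆) + (1/2)⁅X, Y⁆, where the first sum is over cyclic permutations (α,β,γ) of (1,2,3). Then for all X_1, X_2 ∈ g, the trace of the endomorphism Y ↦ ∇_{⁅X_1,X_2⁆} Y equals tr(J_1 ∘ ad_{J_1 ⁅X_1,X_2⁆}). -/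
/-!
Write `A₀ = ad X` and `Aᵢ = ad (Jᵢ X)` for `X = ⁅X₁, X₂⁆`. By cyclicity of the trace and the
quaternion relations, the defining formula gives
`tr ∇_X = (1/3) (tr (J₁ A₁) + tr (J₂ A₂) + tr (J₃ A₃)) + tr A₀`, and `tr A₀ = 0` since `ad X` is a
commutator. The three remaining traces coincide: composing the integrability condition of `J` with
an anticommuting `I` and taking traces gives `tr (J I ad (J Z)) = tr (I ad Z)`
(`trace_mul_ad_of_integrable`), which for `(J, I, Z) = (J₁, J₂, J₂ X)` and `(J₃, J₁, J₁ X)` yields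
`tr (J₃ A₃) = tr (J₂ A₂)` and `tr (J₂ A₂) = tr (J₁ A₁)`.
-/

open LinearMap in
/-- If `J` is an integrable complex structure and `I` anticommutes with `J`, then
`tr (J I ad (J z)) = tr (I ad z)`. -/
theorem trace_mul_ad_of_integrable {g : Type*} [LieRing g] [LieAlgebra ℝ g]
    (I J : Module.End ℝ g) (hJ : J * J = -1) (hIJ : I * J = -(J * I))
    (hint : ∀ x y : g, ⁅J x, J y⁆ - ⁅x, y⁆ - J ⁅J x, y⁆ - J ⁅x, J y⁆ = 0) (z : g) :
    trace ℝ g (J * I * LieAlgebra.ad ℝ g (J z)) = trace ℝ g (I * LieAlgebra.ad ℝ g z) := by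
  set A : Module.End ℝ g := LieAlgebra.ad ℝ g z with hA
  set B : Module.End ℝ g := LieAlgebra.ad ℝ g (J z) with hB
  have h : B * J - A - J * B - J * A * J = 0 := by
    ext y
    simpa [hA, hB] using hint z y
  have h1 : trace ℝ g (I * B * J) = trace ℝ g (J * I * B) := by
    rw [trace_mul_comm, mul_assoc]
  have h2 : I * J * B = -(J * I * B) := by rw [hIJ, neg_mul]
  have h3 : trace ℝ g (I * J * A * J) = trace ℝ g (I * A) := by
    rw [trace_mul_comm]
    congr 1
    calc J * (I * J * A) = J * (I * J) * A := by noncomm_ring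
      _ = -(J * J) * I * A := by rw [hIJ]; noncomm_ring
      _ = I * A := by rw [hJ]; simp
  have h4 : I * B * J - I * A - I * J * B - I * J * A * J = 0 := by
    calc _ = I * (B * J - A - J * B - J * A * J) := by noncomm_ring
      _ = 0 := by rw [h, mul_zero]
  have h5 := congrArg (trace ℝ g) h4
  simp only [map_sub, map_zero, h2, map_neg, h1, h3] at h5
  linarith

/-- The trace of the Obata operator `∇_{⁅X₁,X₂⁆}` on a real Lie algebra with a
hypercomplex structure equals `tr(J₁ ∘ ad_{J₁ ⁅X₁,X₂⁆})`. -/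
theorem trace_obata_eq_trace_J_ad
    (g : Type*) [LieRing g] [LieAlgebra ℝ g] [Module.Finite ℝ g]
    (J₁ J₂ J₃ : g →ₗ[ℝ] g)
    (hJ1 : ∀ x : g, J₁ (J₁ x) = -x)
    (hJ2 : ∀ x : g, J₂ (J₂ x) = -x)
    (hJ3 : ∀ x : g, J₃ (J₃ x) = -x)
    (hint1 : ∀ x y : g, ⁅J₁ x, J₁ y⁆ - ⁅x, y⁆ - J₁ ⁅J₁ x, y⁆ - J₁ ⁅x, J₁ y⁆ = 0)
    (hint2 : ∀ x y : g, ⁅J₂ x, J₂ y⁆ - ⁅x, y⁆ - J₂ ⁅J₂ x, y⁆ - J₂ ⁅x, J₂ y⁆ = 0)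
    (hint3 : ∀ x y : g, ⁅J₃ x, J₃ y⁆ - ⁅x, y⁆ - J₃ ⁅J₃ x, y⁆ - J₃ ⁅x, J₃ y⁆ = 0)
    (hquat : ∀ x : g, J₁ (J₂ x) = J₃ x ∧ J₂ (J₁ x) = -(J₃ x))
    (nabla : g → g →ₗ[ℝ] g)
    (hnabla : ∀ X Y : g, nabla X Y =
      (1/12 : ℝ) • (J₁ (⁅J₂ X, J₃ Y⁆ + ⁅J₂ Y, J₃ X⁆)
                  + J₂ (⁅J₃ X, J₁ Y⁆ + ⁅J₃ Y, J₁ X⁆)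
                  + J₃ (⁅J₁ X, J₂ Y⁆ + ⁅J₁ Y, J₂ X⁆))
      + (1/6 : ℝ) • (J₁ (⁅J₁ X, Y⁆ + ⁅J₁ Y, X⁆)
                   + J₂ (⁅J₂ X, Y⁆ + ⁅J₂ Y, X⁆)
                   + J₃ (⁅J₃ X, Y⁆ + ⁅J₃ Y, X⁆))
      + (1/2 : ℝ) • ⁅X, Y⁆)
    (X₁ X₂ : g) :
    LinearMap.trace ℝ g (nabla ⁅X₁, X₂⁆) =
      LinearMap.trace ℝ g (J₁ ∘ₗ LieAlgebra.ad ℝ g (J₁ ⁅X₁, X₂⁆)) := by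
  set X : g := ⁅X₁, X₂⁆ with hX
  have e11 : J₁ * J₁ = -1 := by ext x; simp [hJ1]
  have e22 : J₂ * J₂ = -1 := by ext x; simp [hJ2]
  have e33 : J₃ * J₃ = -1 := by ext x; simp [hJ3]
  have e12 : J₁ * J₂ = J₃ := by ext x; simp [(hquat x).1]
  have e21 : J₂ * J₁ = -J₃ := by ext x; simp [(hquat x).2]
  have e13 : J₁ * J₃ = -J₂ := by rw [← e12, ← mul_assoc, e11]; simp
  have e31 : J₃ * J₁ = J₂ := by
    rw [← neg_neg J₃, ← e21, neg_mul, mul_assoc, e11]; simp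
  have e32 : J₃ * J₂ = -J₁ := by rw [← e12, mul_assoc, e22]; simp
  have e23 : J₂ * J₃ = J₁ := by
    rw [← neg_neg J₃, ← e21, mul_neg, ← mul_assoc, e22]; simp
  set A : g → Module.End ℝ g := fun x => LieAlgebra.ad ℝ g x with hA
  have t32 : LinearMap.trace ℝ g (J₃ * A (J₃ X)) = LinearMap.trace ℝ g (J₂ * A (J₂ X)) := by
    have := trace_mul_ad_of_integrable J₂ J₁ e11 (by rw [e21, e12]) hint1 (J₂ X)
    rwa [(hquat X).1, e12] at this
  have t21 : LinearMap.trace ℝ g (J₂ * A (J₂ X)) = LinearMap.trace ℝ g (J₁ * A (J₁ X)) := by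
    have := trace_mul_ad_of_integrable J₁ J₃ e33 (by rw [e13, e31]) hint3 (J₁ X)
    rwa [← Module.End.mul_apply, e31] at this
  have t0 : LinearMap.trace ℝ g (A X) = 0 := by
    simp only [hA, hX, LieHom.map_lie, Ring.lie_def, map_sub]
    rw [LinearMap.trace_mul_comm, sub_self]
  -- `tr (P A Q) = tr (Q P A)`, in the shape in which the terms of `∇_X` occur
  have cyc : ∀ P Q B : Module.End ℝ g,
      LinearMap.trace ℝ g (P * B * Q) = LinearMap.trace ℝ g (Q * P * B) := fun P Q B => by
    rw [LinearMap.trace_mul_comm, mul_assoc]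
  have hn : nabla X =
      (1/12 : ℝ) • ((J₁ * A (J₂ X) * J₃ - J₁ * A (J₃ X) * J₂)
                  + (J₂ * A (J₃ X) * J₁ - J₂ * A (J₁ X) * J₃)
                  + (J₃ * A (J₁ X) * J₂ - J₃ * A (J₂ X) * J₁))
      + (1/6 : ℝ) • ((J₁ * A (J₁ X) - J₁ * A X * J₁)
                   + (J₂ * A (J₂ X) - J₂ * A X * J₂)
                   + (J₃ * A (J₃ X) - J₃ * A X * J₃))
      + (1/2 : ℝ) • A X := by
    ext Y
    rw [hnabla, ← lie_skew (J₂ Y) (J₃ X), ← lie_skew (J₃ Y) (J₁ X), ← lie_skew (J₁ Y) (J₂ X),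
      ← lie_skew (J₁ Y) X, ← lie_skew (J₂ Y) X, ← lie_skew (J₃ Y) X]
    simp [hA, sub_eq_add_neg, -lie_skew]
  change _ = LinearMap.trace ℝ g (J₁ * A (J₁ X))
  rw [hn]
  simp only [map_add, map_sub, map_smul, cyc, e11, e22, e33, e12, e21, e13, e31, e32, e23,
    neg_mul, one_mul, map_neg, t0, t32, t21, smul_eq_mul]
  ring
end

section
/- Let g be a finite-dimensional real Lie algebra with an abelian complex structure J (an ℝ-linear map with J ∘ J = −id and ⁅Jx, Jy⁆ = ⁅x, y⁆ for all x, y) and let ⟨·,·⟩ be an inner product on g which is Hermitian with respect to J (⟨Jx, Jy⟩ = ⟨x, y⟩). Define ∇ : g × g → g by the requirement ⟨∇_X Y, Z⟩ = −⟨X, ⁅Y, Z⁆⟩ for all X, Y, Z. Then: (1) each ∇_X is skew-adjoint with respect to ⟨·,·⟩, i.e. ⟨∇_X Y, Z⟩ + ⟨Y, ∇_X Z⟩ = 0; (2) each ∇_X commutes with J, i.e. ∇_X (JY) = J(∇_X Y); and (3) the torsion tensor c(X, Y, Z) = ⟨X, ∇_Y Z − ∇_Z Y − ⁅Y, Z⁆⟩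 is totally skew-symmetric in X, Y, Z. (Hence ∇ is the Bismut connection of (g, J, ⟨·,·⟩).) -/
/-!
Pairing with a third vector turns every claim into an identity for the trilinear form
`B X ⁅Y, Z⁆`. Skew-adjointness of `∇_X` is antisymmetry of the bracket. For `J`-linearity, `J` is
`B`-skew and abelianness of `J` gives `⁅J Y, Z⁆ = -⁅Y, J Z⁆`, so both sides of
`∇_X (J Y) = J (∇_X Y)` have the same pairings, and `B` is nondegenerate. The torsion is
`c(X, Y, Z) = -(B X ⁅Y, Z⁆ + B Y ⁅Z, X⁆ + B Z ⁅X, Y⁆)`, a cyclic sum that is visibly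
antisymmetric under transpositions.
-/

/-- For an abelian complex structure `J` on a finite-dimensional real Lie algebra with a
`J`-Hermitian inner product `B`, the connection `∇` defined by `B(∇_X Y, Z) = -B(X,⁅Y,Z⁆)`
is metric (skew-adjoint), commutes with `J`, and has totally skew-symmetric torsion:
it is the Bismut connection. -/
theorem bismut_connection_of_abelian
    (g : Type*) [LieRing g] [LieAlgebra ℝ g] [Module.Finite ℝ g]
    (J : g →ₗ[ℝ] g)
    (hJ2 : ∀ x : g, J (J x) = -x)
    (habel : ∀ x y : g, ⁅J x, J y⁆ = ⁅x, y⁆)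
    (B : g →ₗ[ℝ] g →ₗ[ℝ] ℝ)
    (hsymm : ∀ x y : g, B x y = B y x)
    (hpos : ∀ x : g, x ≠ 0 → 0 < B x x)
    (hherm : ∀ x y : g, B (J x) (J y) = B x y)
    (nabla : g → g → g)
    (hnabla : ∀ X Y Z : g, B (nabla X Y) Z = -(B X ⁅Y, Z⁆)) :
    (∀ X Y Z : g, B (nabla X Y) Z + B Y (nabla X Z) = 0) ∧
    (∀ X Y : g, nabla X (J Y) = J (nabla X Y)) ∧
    (∀ X Y Z : g,
      B X (nabla Y Z - nabla Z Y - ⁅Y, Z⁆) = -(B Y (nabla X Z - nabla Z X - ⁅X, Z⁆)) ∧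
      B X (nabla Y Z - nabla Z Y - ⁅Y, Z⁆) = -(B X (nabla Z Y - nabla Y Z - ⁅Z, Y⁆))) := by
  have metric : ∀ X Y Z : g, B Y (nabla X Z) = -(B X ⁅Z, Y⁆) := fun X Y Z => by
    rw [hsymm, hnabla]
  have cyclic : ∀ X Y Z : g, B X (nabla Y Z - nabla Z Y - ⁅Y, Z⁆)
      = -(B X ⁅Y, Z⁆ + B Y ⁅Z, X⁆ + B Z ⁅X, Y⁆) := fun X Y Z => by
    rw [map_sub, map_sub, metric, metric, ← lie_skew X Y, map_neg]
    ring
  refine ⟨fun X Y Z => ?_, fun X Y => ?_, fun X Y Z => ⟨?_, ?_⟩⟩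
  · rw [hnabla, metric, ← lie_skew Y Z, map_neg]
    ring
  -- A positive definite form is nondegenerate, so it suffices to pair both sides with each `Z`.
  · have pairing : ∀ Z : g, B (nabla X (J Y) - J (nabla X Y)) Z = 0 := fun Z => by
      have hJ_skew : B (J (nabla X Y)) Z = -(B (nabla X Y) (J Z)) := by
        rw [← hherm, hJ2, map_neg, LinearMap.neg_apply]
      have hlie : ⁅J Y, Z⁆ = -⁅Y, J Z⁆ := by
        rw [← habel, hJ2, neg_lie]
      rw [map_sub, LinearMap.sub_apply, hJ_skew, hnabla, hnabla, hlie, map_neg]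
      ring
    by_contra hne
    exact (hpos _ (sub_ne_zero.mpr hne)).ne' (pairing _)
  · rw [cyclic, cyclic, ← lie_skew X Z, ← lie_skew Z Y, ← lie_skew Y X]
    simp only [map_neg]
    ring
  · rw [cyclic, cyclic, ← lie_skew Z Y, ← lie_skew Y X, ← lie_skew X Z]
    simp only [map_neg]
    ring
end

section
/- Let V be a finite-dimensional real inner product space equipped with three ℝ-linear endomorphisms I, J, K satisfying I ∘ I = J ∘ J = K ∘ K = −id and I ∘ J = K = −J ∘ I, and suppose the inner product is Hermitian with respect to each of them (⟨Ix, Iy⟩ = ⟨Jx, Jy⟩ = ⟨Kx, Ky⟩ = ⟨x, y⟩). If A : V → V is an ℝ-linear map commuting with I, J and K, then tr(J ∘ A) = 0. -/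
/-- On a finite-dimensional real vector space with a quaternionic Hermitian structure
`(I, J, K, B)`, any endomorphism `A` commuting with `I`, `J`, `K` satisfies
`tr(J ∘ A) = 0`. -/
theorem trace_J_comp_eq_zero_of_quaternionic
    (V : Type*) [AddCommGroup V] [Module ℝ V] [Module.Finite ℝ V]
    (B : V →ₗ[ℝ] V →ₗ[ℝ] ℝ)
    (hsymm : ∀ x y : V, B x y = B y x)
    (hpos : ∀ x : V, x ≠ 0 → 0 < B x x)
    (I J K : V →ₗ[ℝ] V)
    (hI2 : ∀ x : V, I (I x) = -x)
    (hJ2 : ∀ x : V, J (J x) = -x)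
    (hK2 : ∀ x : V, K (K x) = -x)
    (hIJ : ∀ x : V, I (J x) = K x)
    (hJI : ∀ x : V, J (I x) = -(K x))
    (hermI : ∀ x y : V, B (I x) (I y) = B x y)
    (hermJ : ∀ x y : V, B (J x) (J y) = B x y)
    (hermK : ∀ x y : V, B (K x) (K y) = B x y)
    (A : V →ₗ[ℝ] V)
    (hAI : ∀ x : V, A (I x) = I (A x))
    (hAJ : ∀ x : V, A (J x) = J (A x))
    (hAK : ∀ x : V, A (K x) = K (A x)) :
    LinearMap.trace ℝ V (J ∘ₗ A) = 0 := by
  -- `I J A I = J A` and `J A I I = -J A`, so cyclicity of the trace gives `tr (J A) = -tr (J A)`.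
  have h := LinearMap.trace_comp_comm' I (J ∘ₗ A ∘ₗ I)
  have h1 : I ∘ₗ (J ∘ₗ A ∘ₗ I) = J ∘ₗ A := by
    ext x
    simp only [LinearMap.comp_apply]
    rw [hAI, hJI, map_neg, ← hIJ, hI2, neg_neg]
  have h2 : (J ∘ₗ A ∘ₗ I) ∘ₗ I = -(J ∘ₗ A) := by
    ext x
    simp only [LinearMap.comp_apply, LinearMap.neg_apply]
    rw [hI2, map_neg, map_neg]
  rw [h1, h2, map_neg] at h
  linarith
end

section
/- Let A be an associative ℝ-algebra and aff(A) = A ⊕ A the Lie algebra with bracket [(a,b),(a',b')] = (aa' − a'a, ab' − a'b). Then the ℝ-linear map J(a,b) = (b, −a) satisfies J ∘ J = −id and is an integrable complex structure on aff(A): [J x, J y] − [x, y] − J[J x, y] − J[x, J y] = 0 for all x, y ∈ aff(A). -/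
/-- On `aff(A) = A ⊕ A` with bracket `[(a,b),(a',b')] = (aa' - a'a, ab' - a'b)`, the
`ℝ`-linear map `J(a,b) = (b, -a)` satisfies `J ∘ J = -id` and is an integrable complex
structure. -/
theorem aff_J_integrable_complex_structure
    (A : Type*) [NonUnitalRing A] [Module ℝ A]
    [SMulCommClass ℝ A A] [IsScalarTower ℝ A A]
    (br : A × A → A × A → A × A)
    (hbr : ∀ x y : A × A, br x y = (x.1 * y.1 - y.1 * x.1, x.1 * y.2 - y.1 * x.2))
    (J : A × A → A × A)
    (hJ : ∀ x : A × A, J x = (x.2, -x.1)) :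
    (∀ (r : ℝ) (x y : A × A), J (r • x + y) = r • J x + J y) ∧
    (∀ x : A × A, J (J x) = -x) ∧
    (∀ x y : A × A, br (J x) (J y) - br x y - J (br (J x) y) - J (br x (J y)) = 0) := by
  refine ⟨?_, ?_, ?_⟩
  · rintro r ⟨a, b⟩ ⟨c, d⟩
    simp only [hJ]
    ext
    · simp
    · simp [add_comm]
  · rintro ⟨a, b⟩
    simp [hJ]
  · rintro ⟨a, b⟩ ⟨c, d⟩
    -- Once expanded, the products cancel in pairs without being commuted,
    -- so the identity holds in the underlying additive group.
    simp only [hbr, hJ]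
    ext
    · simp only [Prod.fst_sub, Prod.fst_zero, mul_neg]
      abel
    · simp only [Prod.snd_sub, Prod.snd_zero, mul_neg]
      abel
end

section
/- Let A be an associative ℝ-algebra and aff(A) = A ⊕ A the Lie algebra with bracket [(a,b),(a',b')] = (aa' − a'a, ab' − a'b), equipped with the complex structure J(a,b) = (b, −a). Then J is abelian, i.e. [J x, J y] = [x, y] for all x, y ∈ aff(A), if and only if A is commutative. -/
/-- On `aff(A) = A ⊕ A` with bracket `[(a,b),(a',b')] = (aa' - a'a, ab' - a'b)` and complex
structure `J(a,b) = (b, -a)`, the structure `J` is abelian if and only if `A` is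
commutative. -/
theorem aff_J_abelian_iff_commutative
    (A : Type*) [NonUnitalRing A] [Module ℝ A]
    [SMulCommClass ℝ A A] [IsScalarTower ℝ A A]
    (br : A × A → A × A → A × A)
    (hbr : ∀ x y : A × A, br x y = (x.1 * y.1 - y.1 * x.1, x.1 * y.2 - y.1 * x.2))
    (J : A × A → A × A)
    (hJ : ∀ x : A × A, J x = (x.2, -x.1)) :
    (∀ x y : A × A, br (J x) (J y) = br x y) ↔ (∀ a b : A, a * b = b * a) := by
  constructor
  · intro h a b
    -- `J` sends `(a, 0)` and `(b, 0)` into the abelian ideal `0 ⊕ A`.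
    have h1 := congrArg Prod.fst (h (a, 0) (b, 0))
    simp only [hbr, hJ, mul_zero, sub_zero] at h1
    exact sub_eq_zero.mp h1.symm
  · intro h x y
    simp only [hbr, hJ]
    refine Prod.ext ?_ ?_
    · simp only [h y.2 x.2, h y.1 x.1, sub_self]
    · simp only [mul_neg, h x.2 y.1, h y.2 x.1]
      abel
end

section
/- Let A be a finite-dimensional associative ℝ-algebra and aff(A) = A ⊕ A the Lie algebra with bracket [(a,b),(a',b')] = (aa' − a'a, ab' − a'b). Then aff(A) is a nilpotent Lie algebra (its lower central series terminates at zero) if and only if A is nilpotent as an associative algebra, i.e. there exists n ≥ 1 such that every product of n elements of A vanishes. -/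
/-!
Products of elements of `A` and iterated brackets in `aff(A)` vanish together.

If `aff(A)` is nilpotent, then since `[(a,0),(0,b)] = (0,ab)`, the element `(0, a₀a₁⋯aₖ)` lies in
the `k`-th term of the lower central series (`zero_prod_mem_affLCS`), so all products of `k + 1`
elements vanish once that term is zero.

Conversely, let `Aᵏ⁺¹` be the span of the products of `k + 1` elements (`prodSpan A k`). Multiplying
on either side by an element of `A` sends `Aᵏ⁺¹` into `Aᵏ⁺²`, so by induction the `k`-th term of the
lower central series is contained in `Aᵏ⁺¹ × Aᵏ⁺¹` (`affLCS_le`).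
-/

variable (A : Type*) [NonUnitalRing A] [Module ℝ A]
  [SMulCommClass ℝ A A] [IsScalarTower ℝ A A]

/-- The bracket of `aff(A) = A ⊕ A`: `[(a,b),(a',b')] = (aa' - a'a, ab' - a'b)`. -/
def affBracket (x y : A × A) : A × A :=
  (x.1 * y.1 - y.1 * x.1, x.1 * y.2 - y.1 * x.2)

/-- The lower central series of the Lie algebra `aff(A)`. -/
def affLCS : ℕ → Submodule ℝ (A × A)
  | 0 => ⊤
  | k + 1 => Submodule.span ℝ
      {z : A × A | ∃ x y : A × A, y ∈ affLCS k ∧ z = affBracket A x y}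

lemma foldl_mul_left {S : Type*} [Semigroup S] (x a : S) (l : List S) :
    l.foldl (· * ·) (x * a) = x * l.foldl (· * ·) a := by
  induction l generalizing a with
  | nil => rfl
  | cons c l ih => rw [List.foldl_cons, List.foldl_cons, mul_assoc, ih]

lemma zero_prod_mem_affLCS (a : A) (l : List A) :
    ((0, l.foldl (· * ·) a) : A × A) ∈ affLCS A l.length := by
  induction l generalizing a with
  | nil => exact Submodule.mem_top
  | cons c l ih =>
    refine Submodule.subset_span ⟨(a, 0), _, ih c, ?_⟩
    simp [affBracket, foldl_mul_left]

/-- The power `Aᵏ⁺¹`: the span of all products of `k + 1` elements of `A`. The index is the number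
of multiplications, so that `prodSpan A 0` is all of `A`. -/
def prodSpan (k : ℕ) : Submodule ℝ A :=
  Submodule.span ℝ {z : A | ∃ (a : A) (l : List A), l.length = k ∧ z = l.foldl (· * ·) a}

lemma mul_left_mem_prodSpan {k : ℕ} (x : A) {y : A} (hy : y ∈ prodSpan A k) :
    x * y ∈ prodSpan A (k + 1) := by
  induction hy using Submodule.span_induction with
  | mem y h =>
    obtain ⟨a, l, hl, rfl⟩ := h
    exact Submodule.subset_span ⟨x, a :: l, by simp [hl], by simp [foldl_mul_left]⟩
  | zero => simp
  | add y z _ _ hy hz => rw [mul_add]; exact add_mem hy hz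
  | smul r y _ hy => rw [mul_smul_comm]; exact Submodule.smul_mem _ r hy

lemma mul_right_mem_prodSpan {k : ℕ} (x : A) {y : A} (hy : y ∈ prodSpan A k) :
    y * x ∈ prodSpan A (k + 1) := by
  induction hy using Submodule.span_induction with
  | mem y h =>
    obtain ⟨a, l, hl, rfl⟩ := h
    exact Submodule.subset_span ⟨a, l ++ [x], by simp [hl], by simp⟩
  | zero => simp
  | add y z _ _ hy hz => rw [add_mul]; exact add_mem hy hz
  | smul r y _ hy => rw [smul_mul_assoc]; exact Submodule.smul_mem _ r hy

lemma affLCS_le (k : ℕ) : affLCS A k ≤ (prodSpan A k).prod (prodSpan A k) := by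
  induction k with
  | zero =>
    intro z _
    exact ⟨Submodule.subset_span ⟨z.1, [], rfl, rfl⟩, Submodule.subset_span ⟨z.2, [], rfl, rfl⟩⟩
  | succ k ih =>
    refine Submodule.span_le.2 ?_
    rintro _ ⟨x, y, hy, rfl⟩
    obtain ⟨h1, h2⟩ := ih hy
    exact ⟨sub_mem (mul_left_mem_prodSpan A _ h1) (mul_right_mem_prodSpan A _ h1),
      sub_mem (mul_left_mem_prodSpan A _ h2) (mul_right_mem_prodSpan A _ h1)⟩

/-- For a finite-dimensional associative real algebra `A`, the Lie algebra
`aff(A) = A ⊕ A` is nilpotent (its lower central series terminates at zero) if and only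
if `A` is nilpotent as an associative algebra (some length of products vanishes). -/
theorem aff_nilpotent_iff_assoc_nilpotent [Module.Finite ℝ A] :
    (∃ k : ℕ, affLCS A k = ⊥) ↔
      (∃ n : ℕ, 1 ≤ n ∧ ∀ (a : A) (l : List A), l.length + 1 = n →
        l.foldl (· * ·) a = 0) := by
  constructor
  · rintro ⟨k, hk⟩
    refine ⟨k + 1, by omega, fun a l hl => ?_⟩
    have h := zero_prod_mem_affLCS A a l
    rw [Nat.succ.inj hl, hk, Submodule.mem_bot] at h
    exact congrArg Prod.snd h
  · rintro ⟨n, hn, h⟩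
    have hbot : prodSpan A (n - 1) = ⊥ := by
      refine Submodule.span_eq_bot.2 ?_
      rintro _ ⟨a, l, hl, rfl⟩
      exact h a l (by omega)
    refine ⟨n - 1, le_bot_iff.1 ?_⟩
    have hle := affLCS_le A (n - 1)
    rwa [hbot, Submodule.prod_bot] at hle
end

section
/- Let A be an associative ℂ-algebra, regarded as a real algebra, and let aff(A) = A ⊕ A be the real Lie algebra with bracket [(a,b),(a',b')] = (aa' − a'a, ab' − a'b), equipped with the complex structure J(a,b) = (b, −a). Define K(a,b) = (−ia, ib). Then K ∘ K = −id, K ∘ J = −J ∘ K, K is an integrable complex structure ([Kx, Ky] − [x, y] − K[Kx, y] − K[x, Ky] = 0 for all x, y), and setting I := J ∘ K, the triple (I, J, K) is a hypercomplex structure on aff(A): I is also integrable and I ∘ J = −J ∘ I = ... with I ∘ I = J ∘ J = K ∘ K = −id and the quaternion relations among I, J, K. -/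
/-- For an associative complex algebra `A`, the real Lie algebra `aff(A) = A ⊕ A` with
bracket `[(a,b),(a',b')] = (aa' - a'a, ab' - a'b)` and complex structure `J(a,b) = (b,-a)`
carries a hypercomplex structure: `K(a,b) = (-ia, ib)` satisfies `K ∘ K = -id`,
anticommutes with `J`, is integrable, and `I := J ∘ K` completes `(I, J, K)` to a
hypercomplex structure with the quaternion relations. -/
theorem aff_hypercomplex
    (A : Type*) [NonUnitalRing A] [Module ℂ A]
    [SMulCommClass ℂ A A] [IsScalarTower ℂ A A]
    (br : A × A → A × A → A × A)
    (hbr : ∀ x y : A × A, br x y = (x.1 * y.1 - y.1 * x.1, x.1 * y.2 - y.1 * x.2))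
    (J : A × A → A × A)
    (hJ : ∀ x : A × A, J x = (x.2, -x.1))
    (K : A × A → A × A)
    (hK : ∀ x : A × A, K x = (-(Complex.I • x.1), Complex.I • x.2))
    (I : A × A → A × A)
    (hI : ∀ x : A × A, I x = J (K x)) :
    (∀ x : A × A, K (K x) = -x) ∧
    (∀ x : A × A, K (J x) = -(J (K x))) ∧
    (∀ x y : A × A, br (K x) (K y) - br x y - K (br (K x) y) - K (br x (K y)) = 0) ∧
    (∀ x : A × A, J (J x) = -x) ∧
    (∀ x y : A × A, br (J x) (J y) - br x y - J (br (J x) y) - J (br x (J y)) = 0) ∧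
    (∀ x : A × A, I (I x) = -x) ∧
    (∀ x y : A × A, br (I x) (I y) - br x y - I (br (I x) y) - I (br x (I y)) = 0) ∧
    (∀ x : A × A, I (J x) = K x) ∧
    (∀ x : A × A, J (I x) = -(K x)) := by
  -- Bilinearity of the product pulls every scalar `i` out to the front, `i * i = -1` removes
  -- the squares, and what remains are identities in the additive group of `A`.
  have hII : ∀ a : A, Complex.I • Complex.I • a = -a := fun a => by
    rw [smul_smul, Complex.I_mul_I, neg_one_smul]
  refine ⟨?_, ?_, ?_, ?_, ?_, ?_, ?_, ?_, ?_⟩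
  all_goals
    intros
    ext <;>
    simp only [hI, hbr, hK, hJ, Prod.fst_sub, Prod.snd_sub, Prod.fst_neg, Prod.snd_neg,
      Prod.fst_zero, Prod.snd_zero, mul_neg, neg_mul, smul_mul_assoc, mul_smul_comm, smul_neg,
      smul_sub, hII] <;>
    abel
end
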